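/- arXiv:1003.1689 — 4 statements merged into one kernel-verified Lean document; each statement's English description precedes it below -/
import Mathlib

section
/- Let X be a Baire space and let Σ ⊆ X be a meagre set (a set of first Baire category). Then the complement X \ Σ, with the subspace topology, is a Baire space. -/
open Set

/- A residual set `s` contains a dense Gδ set `G`. The subspace `G` is Baire and dense in `s`, and
the Baire property passes from a dense subspace to the whole space. -/

section DenseSubspace

open Topology

variable {X Y : Type*} [TopologicalSpace X] [TopologicalSpace Y] {i : Y → X}

theorem dense_preimage_of_isDenseInducing (hi : IsDenseInducing i) {U : Set X}
    (hU : IsOpen U) (hU_dense : Dense U) : Dense (i ⁻¹' U) := by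
  rw [← hi.dense_image, image_preimage_eq_inter_range]
  exact hU_dense.inter_of_isOpen_left hi.dense hU

theorem baireSpace_of_isDenseInducing [BaireSpace Y] (hi : IsDenseInducing i) : BaireSpace X where
  baire_property U hU hU_dense := by
    have preimage_dense : Dense (⋂ n, i ⁻¹' U n) :=
      dense_iInter_of_isOpen_nat (fun n ↦ (hU n).preimage hi.continuous)
        fun n ↦ dense_preimage_of_isDenseInducing hi (hU n) (hU_dense n)
    rw [← preimage_iInter] at preimage_dense
    exact (hi.dense_image.mpr preimage_dense).mono (image_preimage_subset i _)

theorem baireSpace_of_subset_of_subset_closure {s t : Set X} [BaireSpace s] (hst : s ⊆ t)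
    (hts : t ⊆ closure s) : BaireSpace t :=
  baireSpace_of_isDenseInducing (i := inclusion hst)
    ⟨(IsEmbedding.inclusion hst).isInducing, (denseRange_inclusion_iff hst).mpr hts⟩

end DenseSubspace

theorem baireSpace_of_mem_residual {X : Type*} [TopologicalSpace X] [BaireSpace X] {s : Set X}
    (hs : s ∈ residual X) : BaireSpace s := by
  obtain ⟨G, hGs, hG, hG_dense⟩ := mem_residual.mp hs
  have : BaireSpace G := hG.baireSpace_of_dense hG_dense
  exact baireSpace_of_subset_of_subset_closure hGs fun x _ ↦ hG_dense x

/-- Let `X` be a Baire space and `S ⊆ X` a meagre set (a set of first Baire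
category). Then the complement `X \ S` (i.e. `Sᶜ`), with the subspace topology, is a Baire
space. -/
theorem stmt2 {X : Type*} [TopologicalSpace X] [BaireSpace X]
    (S : Set X) (hS : IsMeagre S) :
    BaireSpace ↥(Sᶜ) :=
  baireSpace_of_mem_residual hS
end

section
/- Let Ω be a nonempty open subset of ℝⁿ and let (w_λ)_{λ∈ℕ} be a sequence of continuous real-valued functions on Ω. Suppose there exists a meagre set Σ ⊆ Ω such that for every x ∈ Ω \ Σ there exists λ ∈ ℕ with w_μ(x) = 0 for all μ ≥ λ. Then there exists a closed nowhere dense set Γ ⊆ Ω such that for every x ∈ Ω \ Γ there exist λ ∈ ℕ and an open neighborhood V ⊆ Ω \ Γ of x with w_μ(y) = 0 for all y ∈ V and all μ ≥ λ. -/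
open Set

/-- `G` is a closed nowhere dense subset of `Om`: it is contained in `Om`, closed in the
subspace topology of `Om` (its closure meets `Om` only inside `G`), and has empty interior
(for `G ⊆ Om` with `Om` open, the interior relative to `Om` coincides with the interior). -/
def ClosedNwdIn {n : ℕ} (G Om : Set (Fin n → ℝ)) : Prop :=
  G ⊆ Om ∧ closure G ∩ Om ⊆ G ∧ interior G = ∅

/-- `S` is meagre (of first Baire category) in `Om`: it is contained in a countable union
of closed nowhere dense subsets of `Om`. -/
def MeagreIn {n : ℕ} (S Om : Set (Fin n → ℝ)) : Prop :=
  S ⊆ Om ∧ ∃ C : ℕ → Set (Fin n → ℝ), (∀ k, ClosedNwdIn (C k) Om) ∧ S ⊆ ⋃ k, C k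

/-!
Let `Z l` be the set of points of the open set `U` at which `w m` takes the value `c` for all
`m ≥ l`. It is relatively closed in `U` by continuity, and the sets `Z l` cover `U` up to a meagre
set. Take `G = U \ ⋃ l, interior (Z l)`. A point of `G` lies in that meagre set or in some
`Z l \ interior (Z l)`, and each of the latter is nowhere dense; so `G` is meagre, and the Baire
category theorem gives it empty interior.
-/

section

variable {X : Type*} [TopologicalSpace X] {A U : Set X}

theorem isLocallyClosed_of_closure_inter_subset (hU : IsOpen U) (hAU : A ⊆ U)
    (hA : closure A ∩ U ⊆ A) : IsLocallyClosed A :=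
  ⟨U, closure A, hU, isClosed_closure,
    Subset.antisymm (subset_inter hAU subset_closure) (inter_comm U (closure A) ▸ hA)⟩

theorem isNowhereDense_of_isLocallyClosed (hA : IsLocallyClosed A) (hint : interior A = ∅) :
    IsNowhereDense A := by
  obtain ⟨U, F, hU, hF, rfl⟩ := hA
  have hdisj : Disjoint (interior (closure (U ∩ F))) U := by
    have hsub : interior (closure (U ∩ F)) ⊆ interior F :=
      interior_mono (closure_minimal inter_subset_right hF)
    rw [interior_inter, hU.interior_eq, inter_comm] at hint
    exact (disjoint_iff_inter_eq_empty.2 hint).mono_left hsub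
  have hdisj_closure : Disjoint (interior (closure (U ∩ F))) (closure (U ∩ F)) :=
    (hdisj.mono_right inter_subset_left).closure_right isOpen_interior
  exact hdisj_closure.eq_bot_of_le interior_subset

theorem isNowhereDense_sdiff_interior_of_isLocallyClosed (hA : IsLocallyClosed A) :
    IsNowhereDense (A \ interior A) := by
  refine isNowhereDense_of_isLocallyClosed
    (hA.inter isOpen_interior.isClosed_compl.isLocallyClosed) ?_
  rw [sdiff_eq, interior_inter, interior_compl, ← disjoint_iff_inter_eq_empty]
  exact disjoint_compl_right.mono_right (compl_subset_compl.2 subset_closure)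

theorem isMeagre_sdiff_iUnion_interior {ι : Type*} [Countable ι] {Z : ι → Set X}
    (hZ : ∀ i, IsLocallyClosed (Z i)) (hU : IsMeagre (U \ ⋃ i, Z i)) :
    IsMeagre (U \ ⋃ i, interior (Z i)) := by
  have hcover : U \ ⋃ i, interior (Z i) ⊆ (U \ ⋃ i, Z i) ∪ ⋃ i, Z i \ interior (Z i) := by
    rintro x ⟨hxU, hx⟩
    by_cases hxZ : x ∈ ⋃ i, Z i
    · obtain ⟨i, hi⟩ := mem_iUnion.1 hxZ
      exact Or.inr (mem_iUnion.2 ⟨i, hi, fun hint => hx (mem_iUnion.2 ⟨i, hint⟩)⟩)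
    · exact Or.inl ⟨hxU, hxZ⟩
  exact (hU.union (isMeagre_iUnion fun i =>
    (isNowhereDense_sdiff_interior_of_isLocallyClosed (hZ i)).isMeagre)).mono hcover

theorem interior_eq_empty_of_isMeagre [BaireSpace X] (hA : IsMeagre A) : interior A = ∅ :=
  not_nonempty_iff_eq_empty.1 fun hne =>
    not_isMeagre_of_isOpen isOpen_interior hne (hA.mono interior_subset)

theorem isLocallyClosed_setOf_forall_mem_eq {Y ι : Type*} [TopologicalSpace Y] [T1Space Y]
    (hU : IsOpen U) {f : ι → X → Y} {s : Set ι} (hf : ∀ i ∈ s, ContinuousOn (f i) U) (c : Y) :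
    IsLocallyClosed {x ∈ U | ∀ i ∈ s, f i x = c} := by
  refine isLocallyClosed_of_closure_inter_subset hU (sep_subset _ _) ?_
  rintro x ⟨hx, hxU⟩
  refine ⟨hxU, fun i hi => ?_⟩
  have hmem : f i x ∈ closure ({c} : Set Y) :=
    ((hf i hi x hxU).mono (sep_subset _ _)).mem_closure hx fun y hy => hy.2 i hi
  rwa [closure_singleton] at hmem

theorem stmt3_general [BaireSpace X] {Y ι : Type*} [TopologicalSpace Y] [T1Space Y]
    [Preorder ι] [Countable ι] (hU : IsOpen U) {w : ι → X → Y} {c : Y}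
    (hw : ∀ l, ContinuousOn (w l) U) {S : Set X} (hS : IsMeagre S)
    (hwS : ∀ x ∈ U \ S, ∃ l, ∀ m, l ≤ m → w m x = c) :
    ∃ G : Set X, (G ⊆ U ∧ closure G ∩ U ⊆ G ∧ interior G = ∅) ∧
      ∀ x ∈ U \ G, ∃ (l : ι) (V : Set X),
        IsOpen V ∧ x ∈ V ∧ V ⊆ U \ G ∧ ∀ y ∈ V, ∀ m, l ≤ m → w m y = c := by
  let Z : ι → Set X := fun l => {x ∈ U | ∀ m ∈ Ici l, w m x = c}
  have hZ : ∀ l, IsLocallyClosed (Z l) := fun l =>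
    isLocallyClosed_setOf_forall_mem_eq hU (fun m _ => hw m) c
  have hZS : U \ ⋃ l, Z l ⊆ S := by
    rintro x ⟨hxU, hxZ⟩
    by_contra hxS
    obtain ⟨l, hl⟩ := hwS x ⟨hxU, hxS⟩
    exact hxZ (mem_iUnion.2 ⟨l, hxU, hl⟩)
  have hopen : IsOpen (⋃ l, interior (Z l)) := isOpen_iUnion fun _ => isOpen_interior
  refine ⟨U \ ⋃ l, interior (Z l), ⟨sdiff_subset, ?_, ?_⟩, ?_⟩
  · rintro x ⟨hx, hxU⟩
    exact ⟨hxU, closure_minimal (fun _ hy => hy.2) hopen.isClosed_compl hx⟩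
  · exact interior_eq_empty_of_isMeagre (isMeagre_sdiff_iUnion_interior hZ (hS.mono hZS))
  · rintro x ⟨hxU, hxG⟩
    obtain ⟨l, hl⟩ := mem_iUnion.1 (not_not.1 fun hx => hxG ⟨hxU, hx⟩)
    exact ⟨l, interior (Z l), isOpen_interior, hl,
      fun y hy => ⟨(interior_subset hy).1, fun hyG => hyG.2 (mem_iUnion.2 ⟨l, hy⟩)⟩,
      fun y hy => (interior_subset hy).2⟩

end

theorem ClosedNwdIn.isNowhereDense {n : ℕ} {G Om : Set (Fin n → ℝ)} (hG : ClosedNwdIn G Om)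
    (hOm : IsOpen Om) : IsNowhereDense G :=
  isNowhereDense_of_isLocallyClosed
    (isLocallyClosed_of_closure_inter_subset hOm hG.1 hG.2.1) hG.2.2

theorem MeagreIn.isMeagre {n : ℕ} {S Om : Set (Fin n → ℝ)} (hS : MeagreIn S Om)
    (hOm : IsOpen Om) : IsMeagre S := by
  obtain ⟨-, C, hC, hSC⟩ := hS
  exact (isMeagre_iUnion fun k => ((hC k).isNowhereDense hOm).isMeagre).mono hSC

/-- Let `Om ⊆ ℝⁿ` be nonempty open and `(w l)` a sequence of continuous
real-valued functions on `Om`. If there is a meagre set `S ⊆ Om` such that for every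
`x ∈ Om \ S` there is `l` with `w m x = 0` for all `m ≥ l`, then there is a closed nowhere
dense set `G ⊆ Om` such that for every `x ∈ Om \ G` there are `l ∈ ℕ` and an open
neighborhood `V ⊆ Om \ G` of `x` with `w m y = 0` for all `y ∈ V` and all `m ≥ l`. -/
theorem stmt3 (n : ℕ) (Om : Set (Fin n → ℝ)) (hOm : IsOpen Om) (hne : Om.Nonempty)
    (w : ℕ → (Fin n → ℝ) → ℝ) (hw : ∀ l, ContinuousOn (w l) Om)
    (h : ∃ S : Set (Fin n → ℝ), MeagreIn S Om ∧
      ∀ x ∈ Om \ S, ∃ l : ℕ, ∀ m : ℕ, l ≤ m → w m x = 0) :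
    ∃ G : Set (Fin n → ℝ), ClosedNwdIn G Om ∧
      ∀ x ∈ Om \ G, ∃ (l : ℕ) (V : Set (Fin n → ℝ)),
        IsOpen V ∧ x ∈ V ∧ V ⊆ Om \ G ∧ ∀ y ∈ V, ∀ m : ℕ, l ≤ m → w m y = 0 := by
  obtain ⟨S, hSM, hS⟩ := h
  exact stmt3_general hOm hw (hSM.isMeagre hOm) hS
end

section
/- Let Ω be a nonempty open subset of ℝⁿ and let (Λ, ≤) be a right directed partially ordered set that is countably co-final, i.e., there exists a map ℕ → Λ, i ↦ λ_i, which is an order isomorphic embedding (i ≤ j iff λ_i ≤ λ_j) and whose image is cofinal in Λ (for every λ ∈ Λ there is i ∈ ℕ with λ ≤ λ_i). For Λ-indexed families w = (w_λ)_{λ∈Λ} of smooth real-valued functions on Ω, define: w ∈ I_{L,nd} iff there exists a closed nowhere dense set Γ ⊆ Ω such that for each x ∈ Ω \ Γ there is λ ∈ Λ with w_μ(x) = 0 for all μ ≥ λ; and w ∈ J_{L,B-I} iff the same condition holds with Γ replaced by some meagre set Σ ⊆ Ω. Then J_{L,B-I} = I_{L,nd}. -/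
open Set

/-!
By cofinality, the set of points where `w` eventually vanishes is the union of the countably many
common zero sets of `w_μ`, `μ ≥ λ_i`, each of them closed by continuity. If this union is residual
in a Baire space, then by Baire's theorem the interiors of the closed sets already have a dense
union, so eventual vanishing can fail only on the complement of a dense open set, which is closed
and nowhere dense. As `Ω` is open in `ℝⁿ`, the subspace `Ω` is a Baire space, and meagre or closed
nowhere dense relative to `Ω` means the same as in this subspace.
-/

theorem setOf_exists_forall_ge_mem_eq_iUnion {X Λ ι : Type*} [Preorder Λ] {lam : ι → Λ}
    (hcof : ∀ a, ∃ i, a ≤ lam i) (F : Λ → Set X) :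
    {x | ∃ a, ∀ b, a ≤ b → x ∈ F b} = ⋃ i, ⋂ b ∈ Ici (lam i), F b := by
  ext x
  simp only [mem_ofPred_eq, mem_iUnion, mem_iInter, mem_Ici]
  constructor
  · rintro ⟨a, ha⟩
    obtain ⟨i, hi⟩ := hcof a
    exact ⟨i, fun b hb => ha b (hi.trans hb)⟩
  · rintro ⟨i, hi⟩
    exact ⟨lam i, hi⟩

section Category

open Filter

variable {X : Type*} [TopologicalSpace X]

theorem isMeagre_iff_exists_seq_isClosed_isNowhereDense {s : Set X} :
    IsMeagre s ↔
      ∃ N : ℕ → Set X, (∀ k, IsClosed (N k) ∧ IsNowhereDense (N k)) ∧ s ⊆ ⋃ k, N k := by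
  constructor
  · rw [isMeagre_iff_countable_union_isNowhereDense]
    rintro ⟨T, hT, hTcount, hsT⟩
    obtain ⟨N, hN⟩ := (hTcount.insert ∅).exists_eq_range (insert_nonempty ∅ T)
    have hNnwd : ∀ k, IsNowhereDense (N k) := by
      rw [← forall_mem_range, ← hN]
      exact forall_mem_insert.2 ⟨isNowhereDense_empty, hT⟩
    refine ⟨fun k => closure (N k), fun k => ⟨isClosed_closure, (hNnwd k).closure⟩, ?_⟩
    calc s ⊆ ⋃₀ insert ∅ T := hsT.trans (sUnion_subset_sUnion (subset_insert ∅ T))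
      _ = ⋃ k, N k := by rw [hN, sUnion_range]
      _ ⊆ ⋃ k, closure (N k) := iUnion_mono fun _ => subset_closure
  · rintro ⟨N, hN, hsN⟩
    exact (isMeagre_iUnion fun k => (hN k).2.isMeagre).mono hsN

theorem exists_isMeagre_forall_notMem_iff {p : X → Prop} :
    (∃ s, IsMeagre s ∧ ∀ x ∉ s, p x) ↔ ∀ᶠ x in residual X, p x := by
  constructor
  · rintro ⟨s, hs, hp⟩
    exact mem_of_superset hs hp
  · intro hp
    exact ⟨{x | p x}ᶜ, by rwa [IsMeagre, compl_compl], fun x => not_not.1⟩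

theorem exists_isClosed_isNowhereDense_forall_notMem_iff {p : X → Prop} :
    (∃ s, (IsClosed s ∧ IsNowhereDense s) ∧ ∀ x ∉ s, p x) ↔ Dense (interior {x | p x}) := by
  simp only [isClosed_isNowhereDense_iff_compl]
  constructor
  · rintro ⟨s, ⟨hopen, hdense⟩, hp⟩
    exact hdense.mono (interior_maximal hp hopen)
  · intro hdense
    refine ⟨(interior {x | p x})ᶜ, ?_, fun x hx => interior_subset (not_not.1 hx)⟩
    rw [compl_compl]
    exact ⟨isOpen_interior, hdense⟩

variable [BaireSpace X] {ι : Type*}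

theorem iUnion_mem_residual_iff_dense_interior [Countable ι] {F : ι → Set X}
    (hF : ∀ i, IsClosed (F i)) : ⋃ i, F i ∈ residual X ↔ Dense (interior (⋃ i, F i)) := by
  constructor
  · intro hres
    obtain ⟨T, hTF, hTGδ, hTdense⟩ := mem_residual.1 hres
    exact (hTGδ.dense_iUnion_interior_of_closed hTdense hF hTF).mono
      (iUnion_subset fun i => interior_mono (subset_iUnion F i))
  · intro hdense
    exact mem_of_superset (residual_of_dense_open isOpen_interior hdense) interior_subset

theorem eventually_residual_exists_forall_ge_mem_iff_dense_interior {Λ : Type*} [Preorder Λ]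
    [Countable ι] {lam : ι → Λ} (hcof : ∀ a, ∃ i, a ≤ lam i) {F : Λ → Set X}
    (hF : ∀ a, IsClosed (F a)) :
    (∀ᶠ x in residual X, ∃ a, ∀ b, a ≤ b → x ∈ F b) ↔
      Dense (interior {x | ∃ a, ∀ b, a ≤ b → x ∈ F b}) := by
  rw [Filter.Eventually, setOf_exists_forall_ge_mem_eq_iUnion hcof]
  exact iUnion_mem_residual_iff_dense_interior fun i => isClosed_biInter fun b _ => hF b

end Category

theorem exists_subset_preimage_val_forall_mem_diff_iff {α : Type*} {U : Set α}
    {q : Set U → Prop} {p : α → Prop} :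
    (∃ S, (S ⊆ U ∧ q (Subtype.val ⁻¹' S)) ∧ ∀ x ∈ U \ S, p x) ↔
      ∃ s : Set U, q s ∧ ∀ x ∉ s, p x := by
  constructor
  · rintro ⟨S, ⟨-, hq⟩, hp⟩
    exact ⟨Subtype.val ⁻¹' S, hq, fun x hx => hp x ⟨x.2, hx⟩⟩
  · rintro ⟨s, hq, hp⟩
    refine ⟨Subtype.val '' s, ⟨Subtype.coe_image_subset U s, ?_⟩, ?_⟩
    · rwa [preimage_image_eq s Subtype.val_injective]
    · rintro x ⟨hxU, hxs⟩
      exact hp ⟨x, hxU⟩ fun hx => hxs (mem_image_of_mem Subtype.val hx)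

theorem interior_preimage_val_eq_empty_iff {X : Type*} [TopologicalSpace X] {U s : Set X}
    (hU : IsOpen U) (hs : s ⊆ U) :
    interior (Subtype.val ⁻¹' s : Set U) = ∅ ↔ interior s = ∅ := by
  rw [← hU.isOpenMap_subtype_val.preimage_interior_eq_interior_preimage continuous_subtype_val,
    Subtype.preimage_coe_eq_empty, inter_eq_right.2 (interior_subset.trans hs)]

section OpenSubset

variable {n : ℕ} {Om : Set (Fin n → ℝ)}

theorem closedNwdIn_iff (hOm : IsOpen Om) {G : Set (Fin n → ℝ)} :
    ClosedNwdIn G Om ↔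
      G ⊆ Om ∧ IsClosed (Subtype.val ⁻¹' G : Set Om) ∧
        IsNowhereDense (Subtype.val ⁻¹' G : Set Om) := by
  refine and_congr_right fun hG => ?_
  rw [and_congr_right IsClosed.isNowhereDense_iff, isClosed_preimage_val, inter_eq_right.2 hG,
    inter_comm, interior_preimage_val_eq_empty_iff hOm hG]

theorem meagreIn_iff (hOm : IsOpen Om) {S : Set (Fin n → ℝ)} :
    MeagreIn S Om ↔ S ⊆ Om ∧ IsMeagre (Subtype.val ⁻¹' S : Set Om) := by
  refine and_congr_right fun hS => ?_
  rw [isMeagre_iff_exists_seq_isClosed_isNowhereDense]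
  constructor
  · rintro ⟨C, hC, hSC⟩
    refine ⟨fun k => Subtype.val ⁻¹' C k, fun k => ((closedNwdIn_iff hOm).1 (hC k)).2, ?_⟩
    rw [← preimage_iUnion]
    exact preimage_mono hSC
  · rintro ⟨N, hN, hSN⟩
    refine ⟨fun k => Subtype.val '' N k, fun k => (closedNwdIn_iff hOm).2 ?_, ?_⟩
    · rw [preimage_image_eq _ Subtype.val_injective]
      exact ⟨Subtype.coe_image_subset Om _, hN k⟩
    · rw [← image_iUnion]
      exact fun x hx => ⟨⟨x, hS hx⟩, hSN hx, rfl⟩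

theorem exists_closedNwdIn_forall_mem_diff_iff (hOm : IsOpen Om) {p : (Fin n → ℝ) → Prop} :
    (∃ G, ClosedNwdIn G Om ∧ ∀ x ∈ Om \ G, p x) ↔
      ∃ G : Set Om, (IsClosed G ∧ IsNowhereDense G) ∧ ∀ x ∉ G, p x := by
  simp only [closedNwdIn_iff hOm]
  exact exists_subset_preimage_val_forall_mem_diff_iff
    (q := fun G => IsClosed G ∧ IsNowhereDense G)

theorem exists_meagreIn_forall_mem_diff_iff (hOm : IsOpen Om) {p : (Fin n → ℝ) → Prop} :
    (∃ S, MeagreIn S Om ∧ ∀ x ∈ Om \ S, p x) ↔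
      ∃ S : Set Om, IsMeagre S ∧ ∀ x ∉ S, p x := by
  simp only [meagreIn_iff hOm]
  exact exists_subset_preimage_val_forall_mem_diff_iff

end OpenSubset

theorem stmt5_general {X Y Λ ι : Type*} [TopologicalSpace X] [BaireSpace X] [TopologicalSpace Y]
    [T1Space Y] [Preorder Λ] [Countable ι] {lam : ι → Λ} (hcof : ∀ a, ∃ i, a ≤ lam i)
    {w : Λ → X → Y} (hw : ∀ a, Continuous (w a)) (y : Y) :
    (∃ S, IsMeagre S ∧ ∀ x ∉ S, ∃ a, ∀ b, a ≤ b → w b x = y) ↔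
      ∃ G, (IsClosed G ∧ IsNowhereDense G) ∧ ∀ x ∉ G, ∃ a, ∀ b, a ≤ b → w b x = y := by
  rw [exists_isMeagre_forall_notMem_iff, exists_isClosed_isNowhereDense_forall_notMem_iff]
  exact eventually_residual_exists_forall_ge_mem_iff_dense_interior hcof fun a =>
    isClosed_singleton.preimage (hw a)

/-- Theorem 1 of the paper. Let `Om ⊆ ℝⁿ` be nonempty open and `(Λ, ≤)` a
right directed partially ordered set which is countably co-final: there is `lam : ℕ → Λ` which
is an order isomorphic embedding (`i ≤ j ↔ lam i ≤ lam j`) whose image is cofinal in `Λ`.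
For `Λ`-indexed families of smooth functions, the ideal defined by eventual vanishing off some
meagre set coincides with the one defined by eventual vanishing off some closed nowhere dense
set: `J_{L,B-I} = I_{L,nd}`. -/
theorem stmt5 (n : ℕ) (Om : Set (Fin n → ℝ)) (hOm : IsOpen Om) (hne : Om.Nonempty)
    (Λ : Type*) [PartialOrder Λ]
    (hdir : ∀ a b : Λ, ∃ c : Λ, a ≤ c ∧ b ≤ c)
    (lam : ℕ → Λ) (hemb : ∀ i j : ℕ, i ≤ j ↔ lam i ≤ lam j)
    (hcof : ∀ a : Λ, ∃ i : ℕ, a ≤ lam i) :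
    {w : Λ → (Fin n → ℝ) → ℝ | (∀ a, ContDiffOn ℝ (⊤ : ℕ∞) (w a) Om) ∧
        ∃ S : Set (Fin n → ℝ), MeagreIn S Om ∧
          ∀ x ∈ Om \ S, ∃ a : Λ, ∀ b : Λ, a ≤ b → w b x = 0} =
    {w : Λ → (Fin n → ℝ) → ℝ | (∀ a, ContDiffOn ℝ (⊤ : ℕ∞) (w a) Om) ∧
        ∃ G : Set (Fin n → ℝ), ClosedNwdIn G Om ∧
          ∀ x ∈ Om \ G, ∃ a : Λ, ∀ b : Λ, a ≤ b → w b x = 0} := by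
  have : BaireSpace Om := hOm.baireSpace
  refine ext fun w => and_congr_right fun hw => ?_
  rw [exists_meagreIn_forall_mem_diff_iff hOm, exists_closedNwdIn_forall_mem_diff_iff hOm]
  exact stmt5_general hcof (fun a => (hw a).continuousOn.domRestrict) 0
end

section
/- Let Ω be a nonempty open subset of ℝⁿ and let (w_λ)_{λ∈ℕ} be a sequence of continuous real-valued functions on Ω. The following are equivalent: (1) there exists a closed nowhere dense set Γ ⊆ Ω such that for every x ∈ Ω \ Γ there is λ ∈ ℕ with w_μ(x) = 0 for all μ ≥ λ; (2) there exists a closed nowhere dense set Γ ⊆ Ω such that for every x ∈ Ω \ Γ there exist λ ∈ ℕ and an open neighborhood V ⊆ Ω \ Γ of x with w_μ(y) = 0 for all y ∈ V and all μ ≥ λ. -/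
open Set

/-! For a sequence `w` that is pointwise eventually zero on `S \ G`, the sets
`F l = {x ∈ S | ∀ m ≥ l, w m x = 0}` are closed in `S` and cover `S \ G`. The points of `S` with no
neighbourhood inside `S` on which `w` vanishes from a common index on form the set
`S \ ⋃ l, interior (F l)`. If this set had nonempty interior `U`, then `G ∩ U` and all `F l ∩ U`
would be nowhere dense, so `U` would be a nonempty meagre open set, which Baire's theorem forbids.
Hence it can serve as the exceptional set for local vanishing. -/

section RelativelyClosed

variable {X : Type*} [TopologicalSpace X] {A G S U : Set X}

theorem isNowhereDense_inter_of_isOpen (hU : IsOpen U) (hA : closure A ∩ U ⊆ A)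
    (hAU : Disjoint U (interior A)) : IsNowhereDense (A ∩ U) := by
  rw [isNowhereDense_iff_disjoint, disjoint_left]
  rintro x ⟨-, hxU⟩ hx
  have hsub : interior (closure (A ∩ U)) ∩ U ⊆ A := fun y hy =>
    hA ⟨closure_mono inter_subset_left (interior_subset hy.1), hy.2⟩
  exact disjoint_left.1 hAU hxU (interior_maximal hsub (isOpen_interior.inter hU) ⟨hx, hxU⟩)

theorem exists_inter_interior_nonempty_of_isMeagre_sdiff [BaireSpace X] {ι : Type*} [Countable ι]
    {F : ι → Set X} (hU : IsOpen U) (hne : U.Nonempty) (hF : ∀ i, closure (F i) ∩ U ⊆ F i)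
    (hmeagre : IsMeagre (U \ ⋃ i, F i)) : ∃ i, (U ∩ interior (F i)).Nonempty := by
  by_contra! hdisj
  have hunion : IsMeagre (⋃ i, F i ∩ U) := isMeagre_iUnion fun i =>
    (isNowhereDense_inter_of_isOpen hU (hF i) (disjoint_iff_inter_eq_empty.2 (hdisj i))).isMeagre
  refine not_isMeagre_of_isOpen hU hne ((hmeagre.union hunion).mono ?_)
  rw [← iUnion_inter, inter_comm, sdiff_union_inter]

/-- `G` is a closed nowhere dense subset of `S`, the notion of `ClosedNwdIn` in an arbitrary
topological space. As there, the interior is taken in the ambient space, which amounts to the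
interior relative to `S` when `S` is open. -/
def IsClosedNowhereDenseIn (G S : Set X) : Prop :=
  G ⊆ S ∧ closure G ∩ S ⊆ G ∧ interior G = ∅

theorem IsClosedNowhereDenseIn.isNowhereDense_inter (hG : IsClosedNowhereDenseIn G S)
    (hU : IsOpen U) (hUS : U ⊆ S) : IsNowhereDense (G ∩ U) := by
  obtain ⟨-, hGcl, hGint⟩ := hG
  exact isNowhereDense_inter_of_isOpen hU ((inter_subset_inter_right _ hUS).trans hGcl)
    (hGint ▸ disjoint_empty U)

theorem IsClosedNowhereDenseIn.sdiff_iUnion_interior [BaireSpace X] {ι : Type*} [Countable ι]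
    {F : ι → Set X} (hG : IsClosedNowhereDenseIn G S) (hF : ∀ i, closure (F i) ∩ S ⊆ F i)
    (hcover : S \ G ⊆ ⋃ i, F i) : IsClosedNowhereDenseIn (S \ ⋃ i, interior (F i)) S := by
  have hopen : IsOpen (⋃ i, interior (F i)) := isOpen_iUnion fun _ => isOpen_interior
  refine ⟨sdiff_subset, fun x ⟨hx, hxS⟩ => ⟨hxS, ?_⟩, ?_⟩
  · exact closure_minimal (fun _ hy => hy.2) hopen.isClosed_compl hx
  · set U := interior (S \ ⋃ i, interior (F i))
    have hUsub : U ⊆ S \ ⋃ i, interior (F i) := interior_subset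
    have hUS : U ⊆ S := hUsub.trans sdiff_subset
    have hUG : U \ ⋃ i, F i ⊆ G ∩ U := fun x hx =>
      ⟨by_contra fun hxG => hx.2 (hcover ⟨hUS hx.1, hxG⟩), hx.1⟩
    have hmeagre : IsMeagre (U \ ⋃ i, F i) :=
      (hG.isNowhereDense_inter isOpen_interior hUS).isMeagre.mono hUG
    by_contra! hne
    obtain ⟨i, y, hyU, hyF⟩ := exists_inter_interior_nonempty_of_isMeagre_sdiff isOpen_interior hne
      (fun i => (inter_subset_inter_right _ hUS).trans (hF i)) hmeagre
    exact (hUsub hyU).2 (mem_iUnion_of_mem i hyF)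

end RelativelyClosed

section EventuallyZero

variable {X E ι : Type*} [Zero E] [LE ι]

/-- The set of points of `S` at which all `w m` with `m ≥ l` vanish. The interiors of these sets
consist of the points near which `w` vanishes from a common index on. -/
def tailZeroSet (w : ι → X → E) (S : Set X) (l : ι) : Set X :=
  {x ∈ S | ∀ m, l ≤ m → w m x = 0}

variable [TopologicalSpace X] [TopologicalSpace E] [T1Space E] {S : Set X} {w : ι → X → E}

theorem closure_tailZeroSet_inter_subset (hw : ∀ l, ContinuousOn (w l) S) (l : ι) :
    closure (tailZeroSet w S l) ∩ S ⊆ tailZeroSet w S l := by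
  rintro x ⟨hx, hxS⟩
  refine ⟨hxS, fun m hlm => ?_⟩
  have hcont : ContinuousWithinAt (w m) (tailZeroSet w S l) x :=
    (hw m x hxS).mono fun _ hy => hy.1
  have hmaps : MapsTo (w m) (tailZeroSet w S l) {0} := fun _ hy => hy.2 m hlm
  simpa only [closure_singleton, mem_singleton_iff] using hcont.mem_closure hx hmaps

end EventuallyZero

theorem stmt18_general {X E ι : Type*} [TopologicalSpace X] [BaireSpace X] [TopologicalSpace E]
    [T1Space E] [Zero E] [LE ι] [Countable ι] {S : Set X} {w : ι → X → E}
    (hw : ∀ l, ContinuousOn (w l) S) :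
    (∃ G : Set X, IsClosedNowhereDenseIn G S ∧
        ∀ x ∈ S \ G, ∃ l, ∀ m, l ≤ m → w m x = 0) ↔
    (∃ G : Set X, IsClosedNowhereDenseIn G S ∧
        ∀ x ∈ S \ G, ∃ (l : ι) (V : Set X),
          IsOpen V ∧ x ∈ V ∧ V ⊆ S \ G ∧ ∀ y ∈ V, ∀ m, l ≤ m → w m y = 0) := by
  constructor
  · rintro ⟨G, hG, hzero⟩
    have hcover : S \ G ⊆ ⋃ l, tailZeroSet w S l := fun x hx =>
      mem_iUnion.2 ((hzero x hx).imp fun _ hl => ⟨hx.1, hl⟩)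
    refine ⟨S \ ⋃ l, interior (tailZeroSet w S l),
      hG.sdiff_iUnion_interior (closure_tailZeroSet_inter_subset hw) hcover, fun x hx => ?_⟩
    obtain ⟨l, hxl⟩ : ∃ l, x ∈ interior (tailZeroSet w S l) :=
      mem_iUnion.1 (by_contra fun hxD => hx.2 ⟨hx.1, hxD⟩)
    exact ⟨l, interior (tailZeroSet w S l), isOpen_interior, hxl,
      fun y hy => ⟨(interior_subset hy).1, fun hyD => hyD.2 (mem_iUnion_of_mem l hy)⟩,
      fun y hy => (interior_subset hy).2⟩
  · rintro ⟨G, hG, hlocal⟩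
    refine ⟨G, hG, fun x hx => ?_⟩
    obtain ⟨l, V, -, hxV, -, hV⟩ := hlocal x hx
    exact ⟨l, hV x hxV⟩

/-- equivalence of pointwise and local eventual vanishing.  For a sequence
`(w l)` of continuous real-valued functions on the nonempty open set `Om ⊆ ℝⁿ`, the following
are equivalent: (1) there is a closed nowhere dense `G ⊆ Om` such that for every `x ∈ Om \ G`
there is `l` with `w m x = 0` for all `m ≥ l`; (2) there is a closed nowhere dense `G ⊆ Om`
such that for every `x ∈ Om \ G` there are `l ∈ ℕ` and an open neighborhood `V ⊆ Om \ G` of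
`x` with `w m y = 0` for all `y ∈ V` and all `m ≥ l`. -/
theorem stmt18 (n : ℕ) (Om : Set (Fin n → ℝ)) (hOm : IsOpen Om) (hne : Om.Nonempty)
    (w : ℕ → (Fin n → ℝ) → ℝ) (hw : ∀ l, ContinuousOn (w l) Om) :
    (∃ G : Set (Fin n → ℝ), ClosedNwdIn G Om ∧
        ∀ x ∈ Om \ G, ∃ l : ℕ, ∀ m : ℕ, l ≤ m → w m x = 0) ↔
    (∃ G : Set (Fin n → ℝ), ClosedNwdIn G Om ∧
        ∀ x ∈ Om \ G, ∃ (l : ℕ) (V : Set (Fin n → ℝ)),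
          IsOpen V ∧ x ∈ V ∧ V ⊆ Om \ G ∧ ∀ y ∈ V, ∀ m : ℕ, l ≤ m → w m y = 0) :=
  stmt18_general hw
end
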